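/- arXiv:gr-qc/9905107 — 2 statements merged into one kernel-verified Lean document; each statement's English description precedes it below -/
import Mathlib

section
/- Fix a point of ℝ^{1+n} and let g_{μν} (μ, ν = 0,…,n) be a symmetric matrix with g_{0i} = 0 for i = 1,…,n and g_{00} ≠ 0. Let bⁱ_j and bⁱ_0 (i, j = 1,…,n) be real numbers satisfying the antisymmetry condition Σ_i (g_{ik} bⁱ_j + g_{ij} bⁱ_k) = 0 for all j, k. Define σ⁰_0 := 0, σ⁰_k := −(1/g_{00}) Σ_j g_{kj} bʲ_0, σⁱ_0 := bⁱ_0, and σⁱ_k := bⁱ_k. Then Σ_{μ,ν,λ} g_{μν} σ^μ_λ v^λ v^ν = 0 for every vector v ∈ ℝ^{1+n}. (Hence a Lorentz-type plus potential external force admits a relativization ẍ^μ = {_λ{}^μ{}_ν} ẋ^λ ẋ^ν + σ^μ_λ ẋ^λ compatible with the relativistic hyperboloid.) -/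
open scoped BigOperators

/-!
Lowering the upper index of `σ` with `g` turns the compatibility condition into the vanishing of the
quadratic form of `g_{μν} σ^μ_λ`, so it holds as soon as this tensor is antisymmetric in `λ, ν`,
that is, as soon as `σ` is skew-adjoint for `g`. Because `g` is block diagonal, skew-adjointness
splits into a space part, which is the antisymmetry assumed of the Lorentz-type force, and a mixed
part, which is solved by `σ⁰ₖ = −g_{kj} bʲ₀ / g₀₀`.
-/

open Matrix

section CompatibilityCondition

variable {R ι : Type*} [CommRing R] [Fintype ι] {J A : Matrix ι ι R}

theorem mulVec_dotProduct_mulVec_eq_sum (A J : Matrix ι ι R) (v w : ι → R) :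
    (A *ᵥ v) ⬝ᵥ (J *ᵥ w) = ∑ μ, ∑ ν, ∑ lam, J μ ν * A μ lam * v lam * w ν := by
  simp only [dotProduct, mulVec, Finset.sum_mul_sum]
  refine Finset.sum_congr rfl fun μ _ => ?_
  rw [Finset.sum_comm]
  refine Finset.sum_congr rfl fun ν _ => Finset.sum_congr rfl fun lam _ => ?_
  ring

theorem isSkewAdjoint_iff_sum_add_eq_zero (hJ : J.IsSymm) :
    J.IsSkewAdjoint A ↔ ∀ i j, ∑ k, (J k j * A k i + J k i * A k j) = 0 := by
  have entry (i j : ι) : (Aᵀ * J + J * A) i j = ∑ k, (J k j * A k i + J k i * A k j) := by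
    simp only [Matrix.add_apply, mul_apply, transpose_apply, ← Finset.sum_add_distrib]
    refine Finset.sum_congr rfl fun k _ => ?_
    rw [hJ.apply k i, mul_comm (A k i)]
  rw [Matrix.IsSkewAdjoint, Matrix.IsAdjointPair, Matrix.mul_neg, eq_neg_iff_add_eq_zero,
    ← Matrix.ext_iff]
  simp only [entry, Matrix.zero_apply]

theorem mulVec_dotProduct_mulVec_self_eq_zero_of_isSkewAdjoint [NoZeroDivisors R] [NeZero (2 : R)]
    (hJ : J.IsSymm) (hA : J.IsSkewAdjoint A) (v : ι → R) : (A *ᵥ v) ⬝ᵥ (J *ᵥ v) = 0 := by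
  have eq_neg : (A *ᵥ v) ⬝ᵥ (J *ᵥ v) = -((A *ᵥ v) ⬝ᵥ (J *ᵥ v)) :=
    calc
      (A *ᵥ v) ⬝ᵥ (J *ᵥ v) = v ⬝ᵥ ((Aᵀ * J) *ᵥ v) := by
        rw [← mulVec_mulVec, dotProduct_mulVec v, vecMul_transpose]
      _ = v ⬝ᵥ ((J * -A) *ᵥ v) := by rw [show Aᵀ * J = J * -A from hA]
      _ = -(v ⬝ᵥ (J *ᵥ (A *ᵥ v))) := by
        rw [Matrix.mul_neg, neg_mulVec, dotProduct_neg, mulVec_mulVec]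
      _ = -((A *ᵥ v) ⬝ᵥ (J *ᵥ v)) := by
        rw [dotProduct_mulVec, ← mulVec_transpose, hJ.eq, dotProduct_comm]
  have two_mul_eq_zero : 2 * ((A *ᵥ v) ⬝ᵥ (J *ᵥ v)) = 0 := by
    rw [two_mul]
    exact eq_neg_iff_add_eq_zero.mp eq_neg
  exact (mul_eq_zero.mp two_mul_eq_zero).resolve_left two_ne_zero

end CompatibilityCondition

theorem isSkewAdjoint_fin_succ_iff {R : Type*} [CommRing R] {n : ℕ}
    {J A : Matrix (Fin (n + 1)) (Fin (n + 1)) R} (hJ : J.IsSymm)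
    (hJ0 : ∀ i : Fin n, J 0 i.succ = 0) :
    J.IsSkewAdjoint A ↔
      2 * (J 0 0 * A 0 0) = 0 ∧
      (∀ k : Fin n, J 0 0 * A 0 k.succ + ∑ i : Fin n, J k.succ i.succ * A i.succ 0 = 0) ∧
      (J.submatrix Fin.succ Fin.succ).IsSkewAdjoint (A.submatrix Fin.succ Fin.succ) := by
  have hJ0' (i : Fin n) : J i.succ 0 = 0 := by rw [hJ.apply, hJ0]
  have mixed (k : Fin n) : ∑ i : Fin n, J i.succ k.succ * A i.succ 0 =
      ∑ i : Fin n, J k.succ i.succ * A i.succ 0 :=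
    Finset.sum_congr rfl fun i _ => by rw [hJ.apply]
  rw [isSkewAdjoint_iff_sum_add_eq_zero hJ, isSkewAdjoint_iff_sum_add_eq_zero (hJ.submatrix _)]
  simp only [Fin.forall_fin_succ, Fin.sum_univ_succ, hJ0, hJ0', submatrix_apply, zero_mul, zero_add,
    add_zero, Finset.sum_const_zero, mixed, two_mul, forall_and]
  tauto

theorem stmt_11_general {K : Type*} [Field K] [NeZero (2 : K)] (n : ℕ)
    (g : Fin (n + 1) → Fin (n + 1) → K)
    (hgsym : ∀ μ ν, g μ ν = g ν μ)
    (hg0i : ∀ i : Fin n, g 0 i.succ = 0)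
    (hg00 : g 0 0 ≠ 0)
    (b : Fin n → Fin (n + 1) → K)
    (hanti : ∀ j k : Fin n, ∑ i, (g i.succ k.succ * b i j.succ + g i.succ j.succ * b i k.succ) = 0)
    (σ : Fin (n + 1) → Fin (n + 1) → K)
    (hσ00 : σ 0 0 = 0)
    (hσ0k : ∀ k : Fin n, σ 0 k.succ = -(1 / g 0 0) * ∑ j, g k.succ j.succ * b j 0)
    (hσi0 : ∀ i : Fin n, σ i.succ 0 = b i 0)
    (hσik : ∀ i k : Fin n, σ i.succ k.succ = b i k.succ) (v : Fin (n + 1) → K) :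
    ∑ μ, ∑ ν, ∑ lam, g μ ν * σ μ lam * v lam * v ν = 0 := by
  have g_symm : (of g).IsSymm := IsSymm.ext fun μ ν => hgsym ν μ
  have mixed (k : Fin n) : g 0 0 * σ 0 k.succ + ∑ i : Fin n, g k.succ i.succ * σ i.succ 0 = 0 := by
    simp only [hσ0k, hσi0]
    field_simp
    ring
  have space : ((of g).submatrix Fin.succ Fin.succ).IsSkewAdjoint
      ((of σ).submatrix Fin.succ Fin.succ) :=
    (isSkewAdjoint_iff_sum_add_eq_zero (g_symm.submatrix _)).mpr fun j k => by
      simpa only [submatrix_apply, of_apply, hσik] using hanti j k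
  have skew : (of g).IsSkewAdjoint (of σ) :=
    (isSkewAdjoint_fin_succ_iff g_symm hg0i).mpr ⟨by simp [hσ00], mixed, space⟩
  exact (mulVec_dotProduct_mulVec_eq_sum (of σ) (of g) v v).symm.trans
    (mulVec_dotProduct_mulVec_self_eq_zero_of_isSkewAdjoint g_symm skew v)

/-- Pointwise verification that the soldering form of a Lorentz-type plus potential force
`σ⁰₀ = 0`, `σ⁰ₖ = −g_{kj} bʲ₀ / g₀₀`, `σⁱ₀ = bⁱ₀`, `σⁱₖ = bⁱₖ` satisfies the
compatibility condition `g_{μν} σ^μ_λ v^λ v^ν = 0` with a metric `g` having `g₀ᵢ = 0`,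
`g₀₀ ≠ 0`, provided `g_{ik} bⁱⱼ + g_{ij} bⁱₖ = 0`. -/
theorem stmt_11 (n : ℕ)
    (g : Fin (n + 1) → Fin (n + 1) → ℝ)
    (hgsym : ∀ μ ν, g μ ν = g ν μ)
    (hg0i : ∀ i : Fin n, g 0 i.succ = 0)
    (hg00 : g 0 0 ≠ 0)
    (b : Fin n → Fin (n + 1) → ℝ)
    (hanti : ∀ j k : Fin n, ∑ i, (g i.succ k.succ * b i j.succ + g i.succ j.succ * b i k.succ) = 0)
    (σ : Fin (n + 1) → Fin (n + 1) → ℝ)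
    (hσ00 : σ 0 0 = 0)
    (hσ0k : ∀ k : Fin n, σ 0 k.succ = -(1 / g 0 0) * ∑ j, g k.succ j.succ * b j 0)
    (hσi0 : ∀ i : Fin n, σ i.succ 0 = b i 0)
    (hσik : ∀ i k : Fin n, σ i.succ k.succ = b i k.succ) :
    ∀ v : Fin (n + 1) → ℝ, ∑ μ, ∑ ν, ∑ lam, g μ ν * σ μ lam * v lam * v ν = 0 :=
  stmt_11_general n g hgsym hg0i hg00 b hanti σ hσ00 hσ0k hσi0 hσik
end

section
/- Let η be the Minkowski bilinear form on ℝ^{1+3}, η(u, w) = u⁰w⁰ − Σ_{i=1}^3 uⁱwⁱ, and let ξ : ℝ^{1+3} → ℝ^{1+3} be smooth. Suppose c : ℝ → ℝ^{1+3} is a C² curve satisfying c''(t) = ξ(c(t)) − η(ξ(c(t)), c'(t)) c'(t) for all t, and η(c'(t₀), c'(t₀)) = 1 for some t₀. Then η(c'(t), c'(t)) = 1 for all t. (Thus the relativization ẍ^λ = ξ^λ − η_{αβ} ξ^β ẋ^α ẋ^λ of a force ξ preserves the relativistic hyperboloid of 4-velocities.) -/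
open scoped BigOperators

/-- The Minkowski bilinear form of signature `(+,−,−,−)` on `ℝ^{1+3}`. -/
def mink (u w : Fin 4 → ℝ) : ℝ :=
  u 0 * w 0 - ∑ i : Fin 3, u i.succ * w i.succ

/-! Along a solution the velocity `v` satisfies `(η(v, v) - 1)' = -2 η(ξ, v) (η(v, v) - 1)`. This is
a homogeneous scalar linear equation, so an integrating factor shows that `η(v, v) - 1` vanishes
everywhere once it vanishes somewhere. -/

section RelativizedForce

variable {E : Type*} [NormedAddCommGroup E] [NormedSpace ℝ E]

theorem eq_exp_integral_smul_of_hasDerivAt_smul {a : ℝ → ℝ} {f : ℝ → E} {s : Set ℝ}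
    (hs : IsOpen s) (hs' : IsPreconnected s) (ha : ContinuousOn a s)
    (hf : ∀ t ∈ s, HasDerivAt f (a t • f t) t) {t₀ t : ℝ} (ht₀ : t₀ ∈ s) (ht : t ∈ s) :
    f t = Real.exp (∫ r in t₀..t, a r) • f t₀ := by
  have hA : ∀ r ∈ s, HasDerivAt (fun r ↦ ∫ x in t₀..r, a x) (a r) r := fun r hr ↦
    intervalIntegral.integral_hasDerivAt_right
      (ha.mono (hs'.ordConnected.uIcc_subset ht₀ hr)).intervalIntegrable
      (ha.stronglyMeasurableAtFilter hs r hr) (ha.continuousAt (hs.mem_nhds hr))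
  have hderiv : ∀ r ∈ s, HasDerivAt (fun r ↦ Real.exp (-∫ x in t₀..r, a x) • f r) 0 r :=
    fun r hr ↦ ((hA r hr).fun_neg.exp.fun_smul (hf r hr)).congr_deriv (by module)
  have hconst : Real.exp (-∫ x in t₀..t, a x) • f t = f t₀ := by
    simpa only [intervalIntegral.integral_same, neg_zero, Real.exp_zero, one_smul] using
      hs.is_const_of_deriv_eq_zero hs'
        (fun r hr ↦ (hderiv r hr).differentiableAt.differentiableWithinAt)
        (fun r hr ↦ (hderiv r hr).deriv) ht ht₀
  rw [← hconst, smul_smul, ← Real.exp_add, add_neg_cancel, Real.exp_zero, one_smul]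

/-- The relativization `f - η(f, v) v` of a force `f` acting on a body of 4-velocity `v`. -/
noncomputable def relativization (η : E →L[ℝ] E →L[ℝ] ℝ) (f v : E) : E :=
  f - η f v • v

theorem apply_relativization_self (η : E →L[ℝ] E →L[ℝ] ℝ) (f v : E) :
    η (relativization η f v) v = η f v * (1 - η v v) := by
  simp only [relativization, map_sub, map_smul, sub_apply, smul_apply, smul_eq_mul]
  ring

theorem hasDerivAt_apply_self_of_symm {η : E →L[ℝ] E →L[ℝ] ℝ} (hη : ∀ u w, η u w = η w u)
    {v : ℝ → E} {v' : E} {t : ℝ} (hv : HasDerivAt v v' t) :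
    HasDerivAt (fun t ↦ η (v t) (v t)) (2 * η v' (v t)) t := by
  refine (η.hasDerivAt_of_bilinear (fun _ ↦ hv) (fun _ ↦ hv)).congr_deriv ?_
  rw [hη (v t) v', two_mul]

/-- The force `f` is recorded as a function of the parameter along the world line, so it may come
from a field depending on time and velocity as well as on position. -/
theorem stmt_12_general {η : E →L[ℝ] E →L[ℝ] ℝ} (hη : ∀ u w, η u w = η w u)
    {s : Set ℝ} (hs : IsOpen s) (hs' : IsPreconnected s)
    {f v : ℝ → E} (hf : ContinuousOn f s)
    (hv : ∀ t ∈ s, HasDerivAt v (relativization η (f t) (v t)) t)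
    {t₀ : ℝ} (ht₀ : t₀ ∈ s) (h₀ : η (v t₀) (v t₀) = 1) {t : ℝ} (ht : t ∈ s) :
    η (v t) (v t) = 1 := by
  have hvc : ContinuousOn v s := fun r hr ↦ (hv r hr).continuousAt.continuousWithinAt
  have ha : ContinuousOn (fun r ↦ -(2 * η (f r) (v r))) s := by fun_prop
  have hdefect : ∀ r ∈ s, HasDerivAt (fun r ↦ η (v r) (v r) - 1)
      (-(2 * η (f r) (v r)) • (η (v r) (v r) - 1)) r := fun r hr ↦ by
    refine ((hasDerivAt_apply_self_of_symm hη (hv r hr)).sub_const 1).congr_deriv ?_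
    rw [apply_relativization_self, smul_eq_mul]
    ring
  have hsol := eq_exp_integral_smul_of_hasDerivAt_smul hs hs' ha hdefect ht₀ ht
  rwa [h₀, sub_self, smul_zero, sub_eq_zero] at hsol

end RelativizedForce

/-- The Minkowski form `mink` as a continuous bilinear map, written as a signed sum of squares of
coordinate functionals. -/
noncomputable def minkowskiForm : (Fin 4 → ℝ) →L[ℝ] (Fin 4 → ℝ) →L[ℝ] ℝ :=
  (ContinuousLinearMap.proj 0).smulRight (ContinuousLinearMap.proj 0) -
    ∑ i : Fin 3, (ContinuousLinearMap.proj i.succ).smulRight (ContinuousLinearMap.proj i.succ)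

theorem minkowskiForm_apply (u w : Fin 4 → ℝ) : minkowskiForm u w = mink u w := by
  simp [minkowskiForm, mink]

theorem minkowskiForm_comm (u w : Fin 4 → ℝ) : minkowskiForm u w = minkowskiForm w u := by
  simp only [minkowskiForm_apply, mink, mul_comm]

theorem relativization_minkowskiForm_apply (f v : Fin 4 → ℝ) (μ : Fin 4) :
    relativization minkowskiForm f v μ = f μ - mink f v * v μ := by
  simp only [relativization, minkowskiForm_apply, Pi.sub_apply, Pi.smul_apply, smul_eq_mul]

theorem hasDerivAt_relativization_of_coord {v : ℝ → Fin 4 → ℝ} {f : Fin 4 → ℝ} {t : ℝ}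
    (hv : ∀ μ, DifferentiableAt ℝ (fun s ↦ v s μ) t)
    (hode : ∀ μ, deriv (fun s ↦ v s μ) t = f μ - mink f (v t) * v t μ) :
    HasDerivAt v (relativization minkowskiForm f (v t)) t := by
  refine hasDerivAt_pi.2 fun μ ↦ ?_
  rw [relativization_minkowskiForm_apply, ← hode]
  exact (hv μ).hasDerivAt

/-- The relativization `c̈ = ξ(c) − η(ξ(c), ċ) ċ` of a force field `ξ` on Minkowski space
preserves the relativistic hyperboloid `η(ċ, ċ) = 1` of 4-velocities. -/
theorem stmt_12
    (ξ : (Fin 4 → ℝ) → Fin 4 → ℝ)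
    (hξ : ∀ lam, ContDiff ℝ (⊤ : ℕ∞) (fun x => ξ x lam))
    (c : ℝ → Fin 4 → ℝ)
    (hc : ∀ μ, ContDiff ℝ 2 (fun t => c t μ))
    (heq : ∀ (t : ℝ) (μ : Fin 4),
      deriv (deriv (fun s => c s μ)) t
        = ξ (c t) μ
          - mink (ξ (c t)) (fun ν => deriv (fun s => c s ν) t)
              * deriv (fun s => c s μ) t)
    (t₀ : ℝ)
    (h₀ : mink (fun ν => deriv (fun s => c s ν) t₀) (fun ν => deriv (fun s => c s ν) t₀) = 1) :
    ∀ t : ℝ, mink (fun ν => deriv (fun s => c s ν) t) (fun ν => deriv (fun s => c s ν) t) = 1 := by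
  have hforce : Continuous fun t ↦ ξ (c t) :=
    (continuous_pi fun μ ↦ (hξ μ).continuous).comp (continuous_pi fun μ ↦ (hc μ).continuous)
  intro t
  rw [← minkowskiForm_apply] at h₀ ⊢
  exact stmt_12_general minkowskiForm_comm isOpen_univ isPreconnected_univ hforce.continuousOn
    (fun r _ ↦ hasDerivAt_relativization_of_coord (fun μ ↦ (hc μ).differentiable_deriv_two r)
      (heq r)) (Set.mem_univ t₀) h₀ (Set.mem_univ t)
end
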